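/- arXiv:1503.01080 — 2 statements merged into one kernel-verified Lean document; each statement's English description precedes it below -/
import Mathlib

section
/- Let m be an odd positive integer and let a be a real number with |a| ≤ 1. If there exists a real number b with T_m(b) = a such that b is constructible over the subfield ℚ(a) of ℝ generated by a, then there exists c ∈ ℚ(a) with T_m(c) = a. -/
open Polynomial

/-- A real number `b` is constructible over a subfield `F` of `ℝ` if there is a finite
chain of subfields `F = F₀ ⊆ F₁ ⊆ … ⊆ F_k` of `ℝ` with `b ∈ F_k`, each step obtained by
adjoining a square root of an element of the previous field. -/
def IsConstructibleOver (F : Subfield ℝ) (b : ℝ) : Prop :=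
  ∃ (k : ℕ) (Fs : ℕ → Subfield ℝ), Fs 0 = F ∧ b ∈ Fs k ∧
    ∀ i < k, ∃ x : ℝ, x ^ 2 ∈ Fs i ∧ Fs (i + 1) = Subfield.closure (↑(Fs i) ∪ {x})

/-- A polynomial over `K` takes values `s + t y`, `s + t z` at a pair with `y + z, y z ∈ K`. -/
lemma aux_pair (K : Subfield ℝ) (y z : ℝ) (hs : y + z ∈ K) (hp : y * z ∈ K) (p : K[X]) :
    ∃ s ∈ K, ∃ t ∈ K, aeval y p = s + t * y ∧ aeval z p = s + t * z := by
  induction p using Polynomial.induction_on with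
  | C r => exact ⟨r, r.2, 0, K.zero_mem, by simp; rfl, by simp; rfl⟩
  | add p q hp hq =>
    obtain ⟨s, hs, t, ht, h1, h2⟩ := hp
    obtain ⟨s', hs', t', ht', h1', h2'⟩ := hq
    refine ⟨s + s', K.add_mem hs hs', t + t', K.add_mem ht ht', ?_, ?_⟩
    · rw [map_add, h1, h1']; ring
    · rw [map_add, h2, h2']; ring
  | monomial n r h =>
    obtain ⟨s, hs', t, ht, h1, h2⟩ := h
    refine ⟨-(t * (y * z)), K.neg_mem (K.mul_mem ht hp), s + t * (y + z),
      K.add_mem hs' (K.mul_mem ht hs), ?_, ?_⟩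
    · rw [pow_succ, ← mul_assoc, map_mul, h1, aeval_X]; ring
    · rw [pow_succ, ← mul_assoc, map_mul, h2, aeval_X]; ring

lemma aux_pairT (K : Subfield ℝ) (y z : ℝ) (hs : y + z ∈ K) (hp : y * z ∈ K) (m : ℤ) :
    ∃ s ∈ K, ∃ t ∈ K, (Chebyshev.T ℝ m).eval y = s + t * y ∧
      (Chebyshev.T ℝ m).eval z = s + t * z := by
  have := aux_pair K y z hs hp (Chebyshev.T K m)
  simpa only [Chebyshev.aeval_T] using this

lemma aux_conj (K : Subfield ℝ) (y z : ℝ) (hs : y + z ∈ K) (hp : y * z ∈ K) (hy : y ∉ K)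
    (m : ℤ) (a : ℝ) (ha : a ∈ K) (h : (Chebyshev.T ℝ m).eval y = a) :
    (Chebyshev.T ℝ m).eval z = a := by
  obtain ⟨s, hs, t, ht, h1, h2⟩ := aux_pairT K y z hs hp m
  have ht0 : t = 0 := by
    by_contra h0
    apply hy
    have : y = (a - s) / t := by field_simp; linarith
    rw [this]
    exact K.div_mem (K.sub_mem ha hs) ht
  subst ht0
  rw [h2, ← h, h1]; ring

lemma aux_neg (m : ℕ) (hm : Odd m) (c : ℝ) :
    (Chebyshev.T ℝ m).eval (-c) = -(Chebyshev.T ℝ m).eval c := by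
  rw [Chebyshev.T_eval_neg]
  simp [hm.neg_one_pow]

lemma aux_sq (K : Subfield ℝ) (m : ℕ) (hm : Odd m) (a c : ℝ) (ha : a ∈ K) (hc : c ^ 2 ∈ K)
    (h : (Chebyshev.T ℝ m).eval c = a) : ∃ c ∈ K, (Chebyshev.T ℝ m).eval c = a := by
  obtain ⟨s, hs, t, ht, h1, h2⟩ := aux_pairT K c (-c) (by simp)
    (by rw [show c * -c = -(c ^ 2) by ring]; exact K.neg_mem hc) m
  rw [aux_neg m hm] at h2
  have hs0 : s = 0 := by linarith
  by_cases ht0 : t = 0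
  · refine ⟨0, K.zero_mem, ?_⟩
    have := aux_neg m hm 0
    rw [neg_zero] at this
    have h3 : a = 0 := by rw [← h, h1, hs0, ht0]; ring
    linarith
  · refine ⟨c, ?_, h⟩
    have : c = a / t := by field_simp; linarith
    rw [this]
    exact K.div_mem ha ht

lemma aux_closure (K : Subfield ℝ) (x b : ℝ) (hx : x ^ 2 ∈ K) (hxK : x ∉ K)
    (hb : b ∈ Subfield.closure (↑K ∪ {x})) : ∃ u ∈ K, ∃ v ∈ K, b = u + v * x := by
  induction hb using Subfield.closure_induction with
  | mem y hy =>
    rcases hy with hy | hy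
    · exact ⟨y, hy, 0, K.zero_mem, by ring⟩
    · exact ⟨0, K.zero_mem, 1, K.one_mem, by rw [hy]; ring⟩
  | one => exact ⟨1, K.one_mem, 0, K.zero_mem, by ring⟩
  | add y z _ _ hy hz =>
    obtain ⟨u, hu, v, hv, rfl⟩ := hy
    obtain ⟨u', hu', v', hv', rfl⟩ := hz
    exact ⟨u + u', K.add_mem hu hu', v + v', K.add_mem hv hv', by ring⟩
  | neg y _ hy =>
    obtain ⟨u, hu, v, hv, rfl⟩ := hy
    exact ⟨-u, K.neg_mem hu, -v, K.neg_mem hv, by ring⟩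
  | mul y z _ _ hy hz =>
    obtain ⟨u, hu, v, hv, rfl⟩ := hy
    obtain ⟨u', hu', v', hv', rfl⟩ := hz
    exact ⟨u * u' + v * v' * x ^ 2,
      K.add_mem (K.mul_mem hu hu') (K.mul_mem (K.mul_mem hv hv') hx),
      u * v' + u' * v, K.add_mem (K.mul_mem hu hv') (K.mul_mem hu' hv), by ring⟩
  | inv y _ hy =>
    obtain ⟨u, hu, v, hv, rfl⟩ := hy
    by_cases hv0 : v = 0
    · exact ⟨u⁻¹, K.inv_mem hu, 0, K.zero_mem, by rw [hv0]; simp⟩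
    have h1 : u + v * x ≠ 0 := by
      intro h
      apply hxK
      have : x = -u / v := by field_simp; linarith
      rw [this]; exact K.div_mem (K.neg_mem hu) hv
    have h2 : u - v * x ≠ 0 := by
      intro h
      apply hxK
      have : x = u / v := by field_simp; linarith
      rw [this]; exact K.div_mem hu hv
    have hd : u ^ 2 - v ^ 2 * x ^ 2 ∈ K :=
      K.sub_mem (K.pow_mem hu 2) (K.mul_mem (K.pow_mem hv 2) hx)
    refine ⟨u / (u ^ 2 - v ^ 2 * x ^ 2), K.div_mem hu hd, -v / (u ^ 2 - v ^ 2 * x ^ 2),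
      K.div_mem (K.neg_mem hv) hd, ?_⟩
    have h3 : u ^ 2 - v ^ 2 * x ^ 2 = (u + v * x) * (u - v * x) := by ring
    rw [h3]
    field_simp
    ring

/-- Trigonometric midpoint of two roots. -/
lemma aux_trig (m : ℕ) (hm : 0 < m) (hodd : Odd m) (a b b' : ℝ) (ha : |a| ≤ 1)
    (h : (Chebyshev.T ℝ m).eval b = a) (h' : (Chebyshev.T ℝ m).eval b' = a) :
    ∃ c e : ℝ, (Chebyshev.T ℝ m).eval c = a ∧ ((Chebyshev.T ℝ m).eval e) ^ 2 = 1 ∧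
      e ^ 2 + c ^ 2 = b * b' + 1 ∧ e ^ 2 * c ^ 2 = ((b + b') / 2) ^ 2 := by
  have hm0 : (m : ℝ) ≠ 0 := by positivity
  have key : ∀ w : ℝ, (Chebyshev.T ℝ m).eval w = a → ∃ θ, w = Real.cos θ := by
    intro w hw
    have : |w| ≤ 1 := by
      rw [← hw] at ha
      exact (Chebyshev.abs_eval_T_real_le_one_iff (by exact_mod_cast hm.ne') w).2 ha
    exact ⟨Real.arccos w, (Real.cos_arccos (abs_le.1 this).1 (abs_le.1 this).2).symm⟩
  have main : ∃ θ θ' : ℝ, ∃ k : ℤ, b = Real.cos θ ∧ b' = Real.cos θ' ∧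
      m * θ' = 2 * k * Real.pi + m * θ := by
    obtain ⟨θ, rfl⟩ := key b h
    obtain ⟨θ', rfl⟩ := key b' h'
    rw [Chebyshev.T_real_cos] at h h'
    rw [← h', Real.cos_eq_cos_iff] at h
    obtain ⟨k, hk | hk⟩ := h
    · exact ⟨θ, θ', k, rfl, rfl, by simpa using hk⟩
    · exact ⟨-θ, θ', k, (Real.cos_neg θ).symm, rfl, by push_cast at hk; linarith⟩
  obtain ⟨θ, θ', k, rfl, rfl, hk⟩ := main
  set α := k * Real.pi / m with hα
  have hmα : m * α = k * Real.pi := by rw [hα]; field_simp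
  have hθ' : θ' = (θ + α) + α := by
    apply mul_left_cancel₀ hm0
    rw [hk, mul_add, mul_add, hmα]; ring
  have hθ : θ = (θ + α) - α := by ring
  have hsin : Real.sin (m * α) = 0 := by rw [hmα]; exact Real.sin_int_mul_pi k
  have hcos : Real.cos (m * α) ^ 2 = 1 := by
    have := Real.sin_sq_add_cos_sq (m * α)
    rw [hsin] at this; linarith
  have hTe : (Chebyshev.T ℝ m).eval (Real.cos α) ^ 2 = 1 := by
    rw [Chebyshev.T_real_cos]; simpa using hcos
  have hTc : (Chebyshev.T ℝ m).eval (Real.cos (θ + α)) = a * Real.cos (m * α) := by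
    rw [Chebyshev.T_real_cos] at h ⊢
    rw [← h]
    push_cast
    rw [mul_add, Real.cos_add, hsin]; ring
  have e1 : Real.cos α ^ 2 + Real.cos (θ + α) ^ 2 = Real.cos θ * Real.cos θ' + 1 := by
    rw [hθ']
    nth_rewrite 2 [hθ]
    generalize θ + α = φ
    rw [Real.cos_sub, Real.cos_add]
    have i1 := Real.sin_sq_add_cos_sq φ
    have i2 := Real.sin_sq_add_cos_sq α
    have j1 : Real.sin φ ^ 2 = 1 - Real.cos φ ^ 2 := by linarith
    have j2 : Real.sin α ^ 2 = 1 - Real.cos α ^ 2 := by linarith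
    have : (Real.cos φ * Real.cos α + Real.sin φ * Real.sin α) *
      (Real.cos φ * Real.cos α - Real.sin φ * Real.sin α) =
      Real.cos φ ^ 2 * Real.cos α ^ 2 - Real.sin φ ^ 2 * Real.sin α ^ 2 := by ring
    rw [this, j1, j2]; ring
  have e2 : Real.cos α ^ 2 * Real.cos (θ + α) ^ 2 =
      ((Real.cos θ + Real.cos θ') / 2) ^ 2 := by
    rw [hθ']
    nth_rewrite 2 [hθ]
    generalize θ + α = φ
    rw [Real.cos_sub, Real.cos_add]
    ring
  rcases (sq_eq_sq_iff_eq_or_eq_neg.1 (hcos.trans (one_pow 2).symm)) with h1 | h1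
  · exact ⟨Real.cos (θ + α), Real.cos α, by rw [hTc, h1, mul_one], hTe, e1, e2⟩
  · refine ⟨-Real.cos (θ + α), Real.cos α, ?_, hTe, ?_, ?_⟩
    · rw [aux_neg m hodd, hTc, h1]; ring
    · rw [neg_sq]; exact e1
    · rw [neg_sq]; exact e2

lemma aux_double (m : ℕ) (e : ℝ) : (Chebyshev.T ℝ m).eval (2 * e ^ 2 - 1) =
    2 * (Chebyshev.T ℝ m).eval e ^ 2 - 1 := by
  have h1 := congrArg (eval e) (Chebyshev.T_mul ℝ m 2)
  have h2 := congrArg (eval e) (Chebyshev.T_mul ℝ 2 m)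
  rw [mul_comm (2 : ℤ), h1] at h2
  simpa [Chebyshev.T_two] using h2

lemma aux_step (K : Subfield ℝ) (m : ℕ) (hm : 0 < m) (hodd : Odd m) (a x b : ℝ)
    (ha : |a| ≤ 1) (haK : a ∈ K) (hx : x ^ 2 ∈ K) (hb : b ∈ Subfield.closure (↑K ∪ {x}))
    (h : (Chebyshev.T ℝ m).eval b = a) : ∃ c ∈ K, (Chebyshev.T ℝ m).eval c = a := by
  by_cases hbK : b ∈ K
  · exact ⟨b, hbK, h⟩
  have hxK : x ∉ K := by
    intro hxK
    apply hbK
    refine (Subfield.closure_le.2 ?_) hb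
    rintro y (hy | hy)
    · exact hy
    · rw [hy]; exact hxK
  obtain ⟨u, hu, v, hv, hbuv⟩ := aux_closure K x b hx hxK hb
  have hs : b + (u - v * x) ∈ K := by
    rw [hbuv, show u + v * x + (u - v * x) = u + u by ring]; exact K.add_mem hu hu
  have hp : b * (u - v * x) ∈ K := by
    rw [hbuv, show (u + v * x) * (u - v * x) = u ^ 2 - v ^ 2 * x ^ 2 by ring]
    exact K.sub_mem (K.pow_mem hu 2) (K.mul_mem (K.pow_mem hv 2) hx)
  have h' := aux_conj K b (u - v * x) hs hp hbK m a haK h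
  obtain ⟨c, e, hc, he, e1, e2⟩ := aux_trig m hm hodd a b _ ha h h'
  have two : (2 : ℝ) ∈ K := by rw [← one_add_one_eq_two]; exact K.add_mem K.one_mem K.one_mem
  have hsum : e ^ 2 + c ^ 2 ∈ K := by rw [e1]; exact K.add_mem hp K.one_mem
  have hprod : e ^ 2 * c ^ 2 ∈ K := by rw [e2]; exact K.pow_mem (K.div_mem hs two) 2
  by_cases heK : e ^ 2 ∈ K
  · refine aux_sq K m hodd a c haK ?_ hc
    have := K.sub_mem hsum heK
    simpa using this
  · have h3 := aux_conj K (2 * e ^ 2 - 1) (2 * c ^ 2 - 1)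
      (by
        rw [show 2 * e ^ 2 - 1 + (2 * c ^ 2 - 1) = 2 * (e ^ 2 + c ^ 2) - 2 by ring]
        exact K.sub_mem (K.mul_mem two hsum) two)
      (by
        rw [show (2 * e ^ 2 - 1) * (2 * c ^ 2 - 1) =
          2 * 2 * (e ^ 2 * c ^ 2) - 2 * (e ^ 2 + c ^ 2) + 1 by ring]
        exact K.add_mem (K.sub_mem (K.mul_mem (K.mul_mem two two) hprod)
          (K.mul_mem two hsum)) K.one_mem)
      (by
        intro hh
        apply heK
        rw [show e ^ 2 = ((2 * e ^ 2 - 1) + 1) / 2 by ring]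
        exact K.div_mem (K.add_mem hh K.one_mem) two)
      m 1 K.one_mem (by rw [aux_double, he]; norm_num)
    rw [aux_double, hc] at h3
    have ha1 : a ^ 2 = 1 := by linarith
    have hT1 : (Chebyshev.T ℝ m).eval (1 : ℝ) = 1 := by simp
    rcases (sq_eq_sq_iff_eq_or_eq_neg.1 (ha1.trans (one_pow 2).symm)) with h1 | h1
    · exact ⟨1, K.one_mem, by rw [hT1, h1]⟩
    · exact ⟨-1, K.neg_mem K.one_mem, by rw [aux_neg m hodd, hT1, h1]⟩

/-- Let `m` be an odd positive integer and `a` a real number with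
`|a| ≤ 1`.  If some real `b` with `T_m(b) = a` is constructible over the subfield
`ℚ(a)` of `ℝ` generated by `a`, then `T_m(x) = a` already has a solution in `ℚ(a)`. -/
theorem exists_root_in_base_of_constructible_root (m : ℕ) (hm : 0 < m) (hmodd : Odd m)
    (a : ℝ) (ha : |a| ≤ 1)
    (hb : ∃ b : ℝ, (Chebyshev.T ℝ m).eval b = a ∧
      IsConstructibleOver (Subfield.closure {a}) b) :
    ∃ c ∈ Subfield.closure ({a} : Set ℝ), (Chebyshev.T ℝ m).eval c = a := by
  obtain ⟨b, hTb, k, Fs, h0, hbk, hstep⟩ := hb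
  have hmem : ∀ i ≤ k, a ∈ Fs i := by
    intro i
    induction i with
    | zero => intro _; rw [h0]; exact Subfield.subset_closure rfl
    | succ i ih =>
      intro hi
      obtain ⟨x, _, hx⟩ := hstep i (by omega)
      rw [hx]
      exact Subfield.subset_closure (Or.inl (ih (by omega)))
  have hdesc : ∀ i ≤ k, (∃ c ∈ Fs i, (Chebyshev.T ℝ m).eval c = a) →
      ∃ c ∈ Fs 0, (Chebyshev.T ℝ m).eval c = a := by
    intro i
    induction i with
    | zero => exact fun _ h => h
    | succ i ih =>
      rintro hi ⟨c, hc, hTc⟩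
      obtain ⟨x, hx2, hx⟩ := hstep i (by omega)
      rw [hx] at hc
      exact ih (by omega)
        (aux_step (Fs i) m hm hmodd a x c ha (hmem i (by omega)) hx2 hc hTc)
  rw [← h0]
  exact hdesc k le_rfl ⟨b, hbk, hTb⟩
end

section
/- Let m be a positive integer whose maximal odd divisor is greater than 1 (i.e., m is not a power of 2). For a rational number a, say a ∈ m-Sect if |a| ≤ 1 and there exists a real number b, constructible over ℚ (the prime subfield of ℝ), with T_m(b) = a. Then the density of m-Sect in [−1,1] ∩ ℚ is zero: the ratio #{a ∈ ℚ : a ∈ m-Sect and H(a) ≤ B} / #{a ∈ ℚ : |a| ≤ 1 and H(a) ≤ B} tends to 0 as B → ∞. -/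
open Polynomial

/-- The height of a rational number `x` (in lowest terms): the maximum of the absolute
value of its numerator and its denominator. -/
def ratHeight (x : ℚ) : ℕ := max x.num.natAbs x.den

/-- A rational number `a` belongs to `m`-Sect if `|a| ≤ 1` and some real number `b`
constructible over `ℚ` (the prime subfield `⊥` of `ℝ`) satisfies `T_m(b) = a`; i.e., an
angle with cosine `a` is `m`-sectable by straightedge and compass. -/
def MemMSect (m : ℕ) (a : ℚ) : Prop :=
  |a| ≤ 1 ∧ ∃ b : ℝ, IsConstructibleOver ⊥ b ∧ (Chebyshev.T ℝ m).eval b = (a : ℝ)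

open IntermediateField in
lemma exists_sqrt_ext (E : IntermediateField ℚ ℂ) (j : ℕ) (hE : Module.finrank ℚ E = 2 ^ j)
    (x : ℂ) (hx : x ^ 2 ∈ E) :
    ∃ (E' : IntermediateField ℚ ℂ) (j' : ℕ), Module.finrank ℚ E' = 2 ^ j' ∧ E ≤ E' ∧ x ∈ E' := by
  have hmon : (X ^ 2 - C (⟨x ^ 2, hx⟩ : E)).Monic := monic_X_pow_sub_C _ two_ne_zero
  have hroot : aeval x (X ^ 2 - C (⟨x ^ 2, hx⟩ : E)) = 0 := by
    simp [IntermediateField.algebraMap_apply]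
  have hint : IsIntegral E x := ⟨_, hmon, by simpa [aeval_def] using hroot⟩
  have hdeg : (minpoly E x).natDegree ≤ 2 := by
    have := natDegree_le_of_dvd (minpoly.dvd E x hroot) hmon.ne_zero
    rwa [natDegree_X_pow_sub_C] at this
  have hpos : 0 < (minpoly E x).natDegree := minpoly.natDegree_pos hint
  have hfr : Module.finrank E E⟮x⟯ = (minpoly E x).natDegree := adjoin.finrank hint
  have htower : Module.finrank ℚ E * Module.finrank E E⟮x⟯ = Module.finrank ℚ E⟮x⟯ :=
    Module.finrank_mul_finrank ℚ E E⟮x⟯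
  have h3 : Module.finrank ℚ (E⟮x⟯.restrictScalars ℚ) = Module.finrank ℚ E⟮x⟯ := rfl
  have hcase : Module.finrank E E⟮x⟯ = 1 ∨ Module.finrank E E⟮x⟯ = 2 := by omega
  have hle : E ≤ E⟮x⟯.restrictScalars ℚ := fun y hy => by
    rw [mem_restrictScalars]
    exact E⟮x⟯.algebraMap_mem (⟨y, hy⟩ : E)
  have hxm : x ∈ E⟮x⟯.restrictScalars ℚ := by
    rw [mem_restrictScalars]; exact mem_adjoin_simple_self E x
  rcases hcase with h | h
  · exact ⟨_, j, by rw [h3, ← htower, h, hE, mul_one], hle, hxm⟩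
  · exact ⟨_, j + 1, by rw [h3, ← htower, h, hE, pow_succ], hle, hxm⟩

lemma constructible_field (b : ℝ) (hb : IsConstructibleOver ⊥ b) :
    ∃ (E : IntermediateField ℚ ℂ) (j : ℕ), Module.finrank ℚ E = 2 ^ j ∧ (b : ℂ) ∈ E := by
  obtain ⟨k, Fs, h0, hbk, hstep⟩ := hb
  have key : ∀ i ≤ k, ∃ (E : IntermediateField ℚ ℂ) (j : ℕ), Module.finrank ℚ E = 2 ^ j ∧
      Fs i ≤ E.toSubfield.comap Complex.ofRealHom := by
    intro i
    induction i with
    | zero =>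
      intro _
      exact ⟨⊥, 0, by simp, by rw [h0]; exact bot_le⟩
    | succ i ih =>
      intro hi
      obtain ⟨E, j, hj, hE⟩ := ih (by omega)
      obtain ⟨x, hx, hF⟩ := hstep i (by omega)
      have hx2 : (x : ℂ) ^ 2 ∈ E := by
        have := hE hx
        simpa [Subfield.mem_comap] using this
      obtain ⟨E', j', hj', hle, hxE⟩ := exists_sqrt_ext E j hj x hx2
      refine ⟨E', j', hj', ?_⟩
      rw [hF, Subfield.closure_le]
      rintro y (hy | hy)
      · exact hle (hE hy)
      · rw [Set.mem_singleton_iff.mp hy]; exact hxE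
  obtain ⟨E, j, hj, hE⟩ := key k le_rfl
  exact ⟨E, j, hj, hE hbk⟩

lemma constructible_eval {m : ℕ} {b : ℝ} (E : IntermediateField ℚ ℂ) (hb : (b : ℂ) ∈ E) :
    (((Chebyshev.T ℝ m).eval b : ℝ) : ℂ) ∈ E := by
  have h : (((Chebyshev.T ℝ m).eval b : ℝ) : ℂ) = aeval (b : ℂ) (Chebyshev.T ℚ m) := by
    rw [Chebyshev.complex_ofReal_eval_T, Chebyshev.aeval_T]
  rw [h]
  have h2 : aeval (b : ℂ) (Chebyshev.T ℚ m) =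
      ((aeval (⟨(b : ℂ), hb⟩ : E) (Chebyshev.T ℚ m) : E) : ℂ) := by
    have := aeval_algebraMap_apply ℂ (⟨(b : ℂ), hb⟩ : E) (Chebyshev.T ℚ m)
    exact this
  rw [h2]
  exact SetLike.coe_mem _

/-- An element of `ℚ(u)` with `u` quadratic is `α + β u`. -/
lemma mem_adjoin_quadratic (u v : ℂ) (a : ℚ) (hu : u ^ 2 - 2 * a * u + 1 = 0)
    (hv : v ∈ IntermediateField.adjoin ℚ {u}) : ∃ α β : ℚ, v = α + β * u := by
  set q : ℚ[X] := X ^ 2 + C (-2 * a) * X + C 1 with hq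
  have hqm : q.Monic := by rw [hq]; monicity!
  have hqd : q.natDegree = 2 := by rw [hq]; compute_degree!
  have hq0 : aeval u q = 0 := by
    rw [hq]; simp; linear_combination hu
  have hint : IsIntegral ℚ u := ⟨q, hqm, by simpa [aeval_def] using hq0⟩
  have hv' : v ∈ (IntermediateField.adjoin ℚ {u}).toSubalgebra := hv
  rw [IntermediateField.adjoin_simple_toSubalgebra_of_isAlgebraic hint.isAlgebraic,
    Algebra.adjoin_singleton_eq_range_aeval] at hv'
  obtain ⟨f, rfl⟩ := hv'
  have h1 : aeval u f = aeval u (f %ₘ q) := by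
    conv_lhs => rw [← modByMonic_add_div f q]
    simp [hq0]
  have h2 : (f %ₘ q).natDegree ≤ 1 := by
    have := natDegree_modByMonic_lt f hqm (by intro h; rw [h] at hqd; simp at hqd)
    omega
  obtain ⟨s, t, hst⟩ := exists_eq_X_add_C_of_natDegree_le_one h2
  refine ⟨t, s, ?_⟩
  change aeval u f = _
  rw [h1, hst]
  simp
  ring

open IntermediateField in
lemma exists_pth_root {p : ℕ} (hp : p.Prime) (hp2 : p ≠ 2) (E : IntermediateField ℚ ℂ) (j : ℕ)
    (hE : Module.finrank ℚ E = 2 ^ j) (w : ℂ) (hw : w ∈ E) :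
    ∃ v ∈ ℚ⟮w ^ p⟯, v ^ p = w ^ p := by
  by_contra! hne
  set L := ℚ⟮w ^ p⟯ with hL
  have huL : w ^ p ∈ L := mem_adjoin_simple_self ℚ _
  have hirr : Irreducible (X ^ p - C (⟨w ^ p, huL⟩ : L)) := by
    apply X_pow_sub_C_irreducible_of_prime hp
    intro b hb
    apply hne b b.2
    simpa using congrArg Subtype.val hb
  have hmon : (X ^ p - C (⟨w ^ p, huL⟩ : L)).Monic := monic_X_pow_sub_C _ hp.ne_zero
  have hroot : aeval w (X ^ p - C (⟨w ^ p, huL⟩ : L)) = 0 := by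
    simp [IntermediateField.algebraMap_apply]
  have hint : IsIntegral L w := ⟨_, hmon, by simpa [aeval_def] using hroot⟩
  have hmin := minpoly.eq_of_irreducible_of_monic hirr hroot hmon
  have hfr : Module.finrank L L⟮w⟯ = p := by
    rw [adjoin.finrank hint, ← hmin, natDegree_X_pow_sub_C]
  have htower : Module.finrank ℚ L * Module.finrank L L⟮w⟯ = Module.finrank ℚ L⟮w⟯ :=
    Module.finrank_mul_finrank ℚ L L⟮w⟯
  have hle : L⟮w⟯.restrictScalars ℚ ≤ E := by
    have hLE : L ≤ E := by
      rw [hL, adjoin_simple_le_iff]; exact pow_mem hw p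
    have h : L⟮w⟯ ≤ extendScalars hLE := by
      rw [adjoin_simple_le_iff]; exact hw
    exact fun y hy => h hy
  have hdvd : Module.finrank ℚ (L⟮w⟯.restrictScalars ℚ) ∣ Module.finrank ℚ E :=
    finrank_dvd_of_le_right hle
  have h3 : Module.finrank ℚ (L⟮w⟯.restrictScalars ℚ) = Module.finrank ℚ L⟮w⟯ := rfl
  rw [h3, ← htower, hfr, hE] at hdvd
  have : p ∣ 2 ^ j := (Dvd.intro_left _ rfl).trans hdvd
  exact hp2 ((Nat.prime_dvd_prime_iff_eq hp Nat.prime_two).mp (hp.dvd_of_dvd_pow this))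

lemma exists_rat_of_memMSect {m p : ℕ} (hm : 0 < m) (hp : p.Prime) (hp2 : p ≠ 2) (hpm : p ∣ m)
    (a : ℚ) (ha : MemMSect m a) :
    ∃ b : ℚ, |b| ≤ 1 ∧ (Chebyshev.T ℚ p).eval b = a := by
  obtain ⟨ha1, b, hb, hba⟩ := ha
  obtain ⟨n, rfl⟩ := hpm
  obtain ⟨E, j, hE, hbE⟩ := constructible_field b hb
  set c : ℝ := (Chebyshev.T ℝ n).eval b with hc
  have hcE : (c : ℂ) ∈ E := constructible_eval E hbE
  have hca : (Chebyshev.T ℝ p).eval c = a := by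
    rw [← hba]; push_cast; rw [Chebyshev.T_mul, eval_comp]
  have ha1' : |(a : ℝ)| ≤ 1 := by exact_mod_cast ha1
  have hc1 : |c| ≤ 1 := by
    rw [← hca] at ha1'
    exact (Chebyshev.abs_eval_T_real_le_one_iff (n := (p : ℤ)) (by exact_mod_cast hp.ne_zero) c).mpr ha1'
  set θ := Real.arccos c with hθ
  have hcθ : Real.cos θ = c := Real.cos_arccos (abs_le.mp hc1).1 (abs_le.mp hc1).2
  have hpa : Real.cos (p * θ) = a := by
    rw [← hca, ← hcθ]; exact_mod_cast (Chebyshev.T_real_cos θ p).symm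
  have hsq : (Real.sin θ * Complex.I) ^ 2 ∈ E := by
    have : (Real.sin θ * Complex.I) ^ 2 = (c : ℂ) ^ 2 - 1 := by
      rw [mul_pow, Complex.I_sq, ← hcθ]
      have := Real.sin_sq_add_cos_sq θ
      have h' : (Real.sin θ : ℂ) ^ 2 + (Real.cos θ : ℂ) ^ 2 = 1 := by exact_mod_cast this
      linear_combination -h'
    rw [this]
    exact sub_mem (pow_mem hcE 2) (one_mem E)
  obtain ⟨E', j', hE', hle, hxE⟩ := exists_sqrt_ext E j hE _ hsq
  set w : ℂ := Complex.exp (θ * Complex.I) with hw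
  have hwE : w ∈ E' := by
    have : w = c + Real.sin θ * Complex.I := by
      rw [hw, Complex.exp_mul_I, ← hcθ]; simp
    rw [this]
    exact add_mem (hle hcE) hxE
  obtain ⟨v, hv, hvp⟩ := exists_pth_root hp hp2 E' j' hE' w hwE
  have hwp : w ^ p = Complex.exp (((p * θ : ℝ) : ℂ) * Complex.I) := by
    rw [hw, ← Complex.exp_nat_mul]; push_cast; ring_nf
  have hre : (w ^ p).re = a := by rw [hwp, Complex.exp_ofReal_mul_I_re, hpa]
  have hquad : (w ^ p) ^ 2 - 2 * a * w ^ p + 1 = 0 := by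
    have h1 : w ^ p = (a : ℂ) + Real.sin (p * θ) * Complex.I := by
      rw [hwp, Complex.exp_mul_I, ← Complex.ofReal_cos, ← Complex.ofReal_sin, hpa]; simp
    have h2 : (Real.sin (p * θ) : ℂ) ^ 2 + (a : ℂ) ^ 2 = 1 := by
      have := Real.sin_sq_add_cos_sq (p * θ)
      rw [hpa] at this
      exact_mod_cast this
    rw [h1]
    linear_combination (Real.sin (p * θ) : ℂ) ^ 2 * Complex.I_sq - h2
  obtain ⟨α, β, hαβ⟩ := mem_adjoin_quadratic _ v a hquad hv
  have hvre : v.re = ((α + β * a : ℚ) : ℝ) := by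
    rw [hαβ]
    simp [hre]
  have hvn : ‖v‖ = 1 := by
    have : ‖v‖ ^ p = 1 := by
      rw [← norm_pow, hvp, hwp, Complex.norm_exp_ofReal_mul_I]
    exact (pow_eq_one_iff_of_nonneg (norm_nonneg v) hp.ne_zero).mp this
  have hve : v = Complex.exp (v.arg * Complex.I) := by
    have := Complex.norm_mul_exp_arg_mul_I v
    rw [hvn] at this; simpa using this.symm
  set φ := v.arg with hφ
  have hcφ : Real.cos φ = ((α + β * a : ℚ) : ℝ) := by
    rw [← hvre, hve, Complex.exp_ofReal_mul_I_re]
  have hcpφ : Real.cos (p * φ) = a := by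
    rw [← hre, ← hvp, hve, ← Complex.exp_nat_mul, ← mul_assoc]
    have := Complex.exp_ofReal_mul_I_re (p * φ)
    push_cast at this
    exact this.symm
  refine ⟨α + β * a, ?_, ?_⟩
  · have := Real.abs_cos_le_one φ
    rw [hcφ] at this
    exact_mod_cast this
  · have h1 := Chebyshev.T_real_cos φ p
    rw [hcφ] at h1
    have h2 : ((p : ℤ) : ℝ) * φ = p * φ := by push_cast; rfl
    rw [h2, hcpφ] at h1
    have h3 := Chebyshev.algebraMap_eval_T (R := ℚ) (R' := ℝ) (α + β * a) p
    simp only [eq_ratCast] at h3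
    rw [h1] at h3
    exact_mod_cast h3

lemma den_pow_mul_C_eval (x : ℚ) (j : ℕ) : ∃ k : ℤ,
    (x.den : ℚ) ^ (j + 1) * (Chebyshev.C ℚ ((j + 1 : ℕ) : ℤ)).eval x =
      (x.num : ℚ) ^ (j + 1) + x.den * k := by
  have hx : (x.den : ℚ) * x = x.num := Rat.den_mul_eq_num x
  induction j using Nat.twoStepInduction with
  | zero => exact ⟨0, by simp [hx]⟩
  | one =>
    refine ⟨-2 * x.den, ?_⟩
    norm_num [Chebyshev.C_two]
    rw [← hx]; ring
  | more j ih1 ih2 =>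
    obtain ⟨k1, h1⟩ := ih1
    obtain ⟨k2, h2⟩ := ih2
    refine ⟨x.num * k2 - x.den * (x.num ^ (j + 1) + x.den * k1), ?_⟩
    have h3 : ((j + 2 + 1 : ℕ) : ℤ) = ((j + 1 : ℕ) : ℤ) + 2 := by push_cast; ring
    have h4 : ((j + 1 : ℕ) : ℤ) + 1 = ((j + 1 + 1 : ℕ) : ℤ) := by push_cast; ring
    rw [h3, Chebyshev.C_add_two, h4, eval_sub, eval_mul, eval_X]
    push_cast at h1 h2 ⊢
    rw [← h1]
    have h5 := congrArg (fun z => (x.num : ℚ) * z) h2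
    rw [← hx] at h5 ⊢
    linear_combination h5

lemma den_bound {p : ℕ} (hp : 0 < p) (b : ℚ) :
    (2 * b).den ^ p ≤ ((Chebyshev.T ℚ p).eval b).den := by
  set x := 2 * b with hx
  obtain ⟨j, rfl⟩ : ∃ j, p = j + 1 := ⟨p - 1, by omega⟩
  obtain ⟨k, hk⟩ := den_pow_mul_C_eval x j
  have hC : (Chebyshev.C ℚ ((j + 1 : ℕ) : ℤ)).eval x
      = 2 * (Chebyshev.T ℚ ((j + 1 : ℕ) : ℤ)).eval b := by
    have := congrArg (eval b) (Chebyshev.C_comp_two_mul_X ℚ ((j + 1 : ℕ) : ℤ))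
    rw [eval_comp] at this
    simpa using this
  have ht : (0 : ℤ) < (x.den : ℤ) ^ (j + 1) := by have := x.pos; positivity
  have hcop : Nat.Coprime (x.num ^ (j + 1) + x.den * k).natAbs ((x.den : ℤ) ^ (j + 1)).natAbs := by
    rw [← Int.isCoprime_iff_nat_coprime]
    apply IsCoprime.pow_right
    have h0 : IsCoprime x.num (x.den : ℤ) := by
      rw [Int.isCoprime_iff_nat_coprime]; simpa using x.reduced
    exact (h0.pow_left).add_mul_left_left k
  have hden := Rat.den_div_eq_of_coprime ht hcop
  have hy : (((x.num ^ (j + 1) + x.den * k : ℤ) : ℚ) / (((x.den : ℤ) ^ (j + 1) : ℤ) : ℚ))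
      = 2 * (Chebyshev.T ℚ ((j + 1 : ℕ) : ℤ)).eval b := by
    rw [← hC, div_eq_iff (by exact_mod_cast ht.ne')]
    push_cast at hk ⊢
    linear_combination -hk
  rw [hy] at hden
  have hd := Rat.mul_den_dvd 2 ((Chebyshev.T ℚ ((j + 1 : ℕ) : ℤ)).eval b)
  have h2 : (2 : ℚ).den = 1 := rfl
  rw [h2, one_mul] at hd
  have := Nat.le_of_dvd (Rat.pos _) hd
  have h3 : x.den ^ (j + 1) = (2 * (Chebyshev.T ℚ ((j + 1 : ℕ) : ℤ)).eval b).den := by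
    exact_mod_cast hden.symm
  rw [h3]; exact this

/-- Integer cube root. -/
def cbrt (N : ℕ) : ℕ := Nat.findGreatest (fun t => t ^ 3 ≤ N) N

lemma cbrt_pow (N : ℕ) : cbrt N ^ 3 ≤ N :=
  Nat.findGreatest_spec (P := fun t => t ^ 3 ≤ N) (m := 0) (Nat.zero_le _) (by simp)

lemma le_cbrt {t N : ℕ} (h : t ^ 3 ≤ N) : t ≤ cbrt N :=
  Nat.le_findGreatest ((Nat.le_self_pow (by norm_num) t).trans h) h

lemma count_num {m p : ℕ} (hm : 0 < m) (hp : p.Prime) (hp2 : p ≠ 2) (hpm : p ∣ m) (B : ℝ) :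
    {a : ℚ | MemMSect m a ∧ (ratHeight a : ℝ) ≤ B}.ncard ≤ 5 * cbrt ⌊B⌋₊ ^ 2 := by
  set K := cbrt ⌊B⌋₊ with hK
  let S : Finset (ℤ × ℕ) := Finset.Icc (-(2 * K : ℤ)) (2 * K) ×ˢ Finset.Icc 1 K
  let f : ℤ × ℕ → ℚ := fun q => (Chebyshev.T ℚ p).eval ((q.1 : ℚ) / q.2 / 2)
  have hsub : {a : ℚ | MemMSect m a ∧ (ratHeight a : ℝ) ≤ B} ⊆ (S.image f : Set ℚ) := by
    rintro a ⟨ha, hB⟩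
    obtain ⟨b, hb1, hba⟩ := exists_rat_of_memMSect hm hp hp2 hpm a ha
    have hN : ratHeight a ≤ ⌊B⌋₊ := Nat.le_floor hB
    have hden := den_bound hp.pos b
    rw [hba] at hden
    have h3 : 3 ≤ p := by have := hp.two_le; omega
    have hK' : (2 * b).den ≤ K := by
      apply le_cbrt
      calc (2 * b).den ^ 3 ≤ (2 * b).den ^ p := Nat.pow_le_pow_right (Rat.pos _) h3
        _ ≤ a.den := hden
        _ ≤ ratHeight a := le_max_right _ _
        _ ≤ _ := hN
    have hx : ((2 * b).den : ℚ) * (2 * b) = (2 * b).num := Rat.den_mul_eq_num _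
    have habs : |(2 * b).num| ≤ 2 * K := by
      have h1 : |((2 * b).num : ℚ)| ≤ 2 * K := by
        rw [← hx, abs_mul, abs_mul, abs_of_nonneg (Nat.cast_nonneg _)]
        have : ((2 * b).den : ℚ) ≤ K := by exact_mod_cast hK'
        have h0 : (0 : ℚ) ≤ (2 * b).den := Nat.cast_nonneg _
        rw [abs_of_pos (by norm_num : (0 : ℚ) < 2)]
        nlinarith [abs_nonneg b]
      exact_mod_cast h1
    rw [Finset.coe_image]
    refine ⟨((2 * b).num, (2 * b).den), ?_, ?_⟩
    · simp only [S, Finset.coe_product, Set.mem_prod, Finset.mem_coe, Finset.mem_Icc]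
      exact ⟨abs_le.mp habs, Rat.pos _, hK'⟩
    · simp only [f]
      rw [Rat.num_div_den, ← hba]
      congr 1; ring
  calc _ ≤ (S.image f : Set ℚ).ncard := Set.ncard_le_ncard hsub (Finset.finite_toSet _)
    _ = (S.image f).card := Set.ncard_coe_finset _
    _ ≤ S.card := Finset.card_image_le
    _ = (4 * K + 1) * K := by
      simp only [S, Finset.card_product, Int.card_Icc, Nat.card_Icc, Nat.add_sub_cancel]
      congr 1; omega
    _ ≤ 5 * K ^ 2 := by nlinarith [Nat.le_self_pow two_ne_zero K]

lemma count_den (B : ℝ) :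
    ⌊B⌋₊ ≤ {a : ℚ | |a| ≤ 1 ∧ (ratHeight a : ℝ) ≤ B}.ncard := by
  set N := ⌊B⌋₊ with hN
  have hfin : {a : ℚ | |a| ≤ 1 ∧ (ratHeight a : ℝ) ≤ B}.Finite := by
    apply ((Finset.Icc (-(N : ℤ)) N ×ˢ Finset.Icc 1 N).image
      (fun q : ℤ × ℕ => (q.1 : ℚ) / q.2)).finite_toSet.subset
    rintro a ⟨-, hB⟩
    have h : ratHeight a ≤ N := Nat.le_floor hB
    have h1 : a.num.natAbs ≤ N := (le_max_left _ _).trans h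
    have h2 : a.den ≤ N := (le_max_right _ _).trans h
    rw [Finset.coe_image]
    refine ⟨(a.num, a.den), ?_, Rat.num_div_den a⟩
    simp only [Finset.coe_product, Set.mem_prod, Finset.mem_coe, Finset.mem_Icc]
    have := a.pos
    omega
  have hinj : Function.Injective (fun n : ℕ => ((n : ℚ))⁻¹) := fun x y h => by simpa using h
  calc N = ((Finset.Icc 1 N).image (fun n : ℕ => ((n : ℚ))⁻¹)).card := by
        rw [Finset.card_image_of_injective _ hinj, Nat.card_Icc, Nat.add_sub_cancel]
    _ = (((Finset.Icc 1 N).image (fun n : ℕ => ((n : ℚ))⁻¹) : Finset ℚ) : Set ℚ).ncard :=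
        (Set.ncard_coe_finset _).symm
    _ ≤ _ := by
      refine Set.ncard_le_ncard ?_ hfin
      rw [Finset.coe_image]
      rintro _ ⟨n, hn, rfl⟩
      rw [Finset.mem_coe, Finset.mem_Icc] at hn
      have hn1 : (1 : ℚ) ≤ n := by exact_mod_cast hn.1
      refine ⟨?_, ?_⟩
      · rw [abs_of_nonneg (by positivity)]
        exact inv_le_one_of_one_le₀ hn1
      · have h1 : ((n : ℚ)⁻¹).num = 1 := Rat.inv_natCast_num_of_pos (by omega)
        have h2 : ((n : ℚ)⁻¹).den = n := Rat.inv_natCast_den_of_pos (by omega)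
        have : ratHeight ((n : ℚ)⁻¹) = n := by
          unfold ratHeight; rw [h1, h2]; simp; omega
        simp only [this]
        exact (Nat.le_floor_iff' (by omega)).mp hn.2

/-- If the maximal odd divisor of the positive integer `m` is greater
than 1 (i.e. `m` is not a power of 2), then the density of `m`-Sect in `[-1,1] ∩ ℚ` is
zero:  the ratio of the number of rationals in `m`-Sect of height `≤ B` to the number of
rationals in `[-1,1]` of height `≤ B` tends to `0` as `B → ∞`. -/
theorem density_mSect_zero (m : ℕ) (hm : 0 < m) (hmodd : 1 < ordCompl[2] m) :
    Filter.Tendsto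
      (fun B : ℝ =>
        ({a : ℚ | MemMSect m a ∧ (ratHeight a : ℝ) ≤ B}.ncard : ℝ) /
        ({a : ℚ | |a| ≤ 1 ∧ (ratHeight a : ℝ) ≤ B}.ncard : ℝ))
      Filter.atTop (nhds 0) := by
  obtain ⟨p, hp, hpd⟩ := Nat.exists_prime_and_dvd hmodd.ne'
  have hp2 : p ≠ 2 := by
    rintro rfl
    exact Nat.not_dvd_ordCompl Nat.prime_two hm.ne' hpd
  have hpm : p ∣ m := hpd.trans (Nat.ordCompl_dvd m 2)
  have hK : Filter.Tendsto (fun B : ℝ => cbrt ⌊B⌋₊) Filter.atTop Filter.atTop := by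
    rw [Filter.tendsto_atTop]
    intro c
    filter_upwards [Filter.eventually_ge_atTop ((c : ℝ) ^ 3)] with B hB
    exact le_cbrt (Nat.le_floor (by push_cast; exact hB))
  have hlim : Filter.Tendsto (fun B : ℝ => (5 : ℝ) / (cbrt ⌊B⌋₊ : ℝ)) Filter.atTop (nhds 0) :=
    (tendsto_natCast_atTop_atTop.comp hK).const_div_atTop 5
  refine squeeze_zero' (Filter.Eventually.of_forall fun B => by positivity) ?_ hlim
  filter_upwards [hK.eventually_ge_atTop 1] with B hB1
  have h1 := count_num hm hp hp2 hpm B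
  have h2 := count_den B
  have h3 := cbrt_pow ⌊B⌋₊
  set K := cbrt ⌊B⌋₊ with hKdef
  have hKpos : (0 : ℝ) < K := by exact_mod_cast hB1
  have h1' : ({a : ℚ | MemMSect m a ∧ (ratHeight a : ℝ) ≤ B}.ncard : ℝ) ≤ 5 * (K : ℝ) ^ 2 := by
    exact_mod_cast h1
  have h2' : (K : ℝ) ^ 3 ≤ ({a : ℚ | |a| ≤ 1 ∧ (ratHeight a : ℝ) ≤ B}.ncard : ℝ) := by
    exact_mod_cast h3.trans h2
  calc _ ≤ 5 * (K : ℝ) ^ 2 / (K : ℝ) ^ 3 := by gcongr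
    _ = 5 / K := by field_simp
end
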